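/- arXiv:1608.02267 — 3 statements merged into one kernel-verified Lean document; each statement's English description precedes it below -/
import Mathlib

section
/- Let T > 0, let N ≥ 1, and let τ_1, …, τ_N be positive real numbers with τ_1 + ⋯ + τ_N = T and τ_n ≤ T/2 for every n. Let H be a complex inner product space and let u^0, …, u^N ∈ H and F^1, …, F^N ∈ H satisfy, for every 1 ≤ n ≤ N, the inequality ‖u^n‖² − ‖u^{n−1}‖² ≤ τ_n ‖F^n‖ (‖u^n‖ + ‖u^{n−1}‖). Then ‖u^N‖² ≤ e⁴ ( ‖u^0‖² + T · Σ_{n=1}^N τ_n ‖F^n‖² ). -/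
/-!
Factoring the left side of the hypothesis as a difference of squares and cancelling
`‖u n‖ + ‖u (n - 1)‖` gives `‖u n‖ ≤ ‖u (n - 1)‖ + τ n ‖F n‖`, hence by summation
`‖u N‖ ≤ ‖u 0‖ + ∑ τ n ‖F n‖`. Squaring, and using the Cauchy–Schwarz inequality
`(∑ τ n ‖F n‖)² ≤ (∑ τ n) (∑ τ n ‖F n‖²)`, yields the estimate with the constant `2 ≤ e⁴`.
-/

/-- Abstract stability-under-perturbation estimate (core of Lemma 2.2):
if `‖u n‖² − ‖u (n−1)‖² ≤ τ n ‖F n‖ (‖u n‖ + ‖u (n−1)‖)` for `1 ≤ n ≤ N`,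
with positive steps summing to `T` and each step at most `T/2`, then
`‖u N‖² ≤ e⁴ (‖u 0‖² + T Σ τ n ‖F n‖²)`. -/
theorem stmt0 {H : Type*} [NormedAddCommGroup H] [InnerProductSpace ℂ H]
    (T : ℝ) (hT : 0 < T) (N : ℕ) (hN : 1 ≤ N) (τ : ℕ → ℝ)
    (hτpos : ∀ n ∈ Finset.Icc 1 N, 0 < τ n)
    (hτsum : ∑ n ∈ Finset.Icc 1 N, τ n = T)
    (hτle : ∀ n ∈ Finset.Icc 1 N, τ n ≤ T / 2)
    (u F : ℕ → H)
    (h : ∀ n ∈ Finset.Icc 1 N,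
      ‖u n‖ ^ 2 - ‖u (n - 1)‖ ^ 2 ≤ τ n * ‖F n‖ * (‖u n‖ + ‖u (n - 1)‖)) :
    ‖u N‖ ^ 2 ≤ Real.exp 4 * (‖u 0‖ ^ 2 + T * ∑ n ∈ Finset.Icc 1 N, τ n * ‖F n‖ ^ 2) := by
  have hstep : ∀ n ∈ Finset.Icc 1 N, ‖u n‖ ≤ ‖u (n - 1)‖ + τ n * ‖F n‖ := by
    intro n hn
    have hF : 0 ≤ τ n * ‖F n‖ := mul_nonneg (hτpos n hn).le (norm_nonneg _)
    have h1 := h n hn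
    have ha := norm_nonneg (u n)
    have hb := norm_nonneg (u (n - 1))
    by_contra! hlt
    -- the sum to be cancelled is positive, since `‖u n‖ > ‖u (n - 1)‖ + τ n ‖F n‖ ≥ 0`
    have hpos : 0 < ‖u n‖ + ‖u (n - 1)‖ := by linarith
    nlinarith [mul_pos hpos (sub_pos.mpr hlt)]
  have htel : ∀ m, m ≤ N → ‖u m‖ ≤ ‖u 0‖ + ∑ n ∈ Finset.Icc 1 m, τ n * ‖F n‖ := by
    intro m
    induction m with
    | zero => intro _; simp
    | succ k ih =>
      intro hk
      have h1 := hstep (k + 1) (Finset.mem_Icc.mpr ⟨by omega, hk⟩)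
      rw [Nat.add_sub_cancel] at h1
      rw [Finset.sum_Icc_succ_top (by omega)]
      linarith [ih (by omega)]
  have hCS : (∑ n ∈ Finset.Icc 1 N, τ n * ‖F n‖) ^ 2
      ≤ T * ∑ n ∈ Finset.Icc 1 N, τ n * ‖F n‖ ^ 2 := by
    rw [← hτsum]
    exact Finset.sum_sq_le_sum_mul_sum_of_sq_le_mul _ (fun n hn => (hτpos n hn).le)
      (fun n hn => mul_nonneg (hτpos n hn).le (sq_nonneg _)) (fun n _ => le_of_eq (by ring))
  have he : (2 : ℝ) ≤ Real.exp 4 := by linarith [Real.add_one_le_exp (4 : ℝ)]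
  set S := ∑ n ∈ Finset.Icc 1 N, τ n * ‖F n‖
  set Q := T * ∑ n ∈ Finset.Icc 1 N, τ n * ‖F n‖ ^ 2
  have hsq : ‖u N‖ ^ 2 ≤ (‖u 0‖ + S) ^ 2 :=
    pow_le_pow_left₀ (norm_nonneg _) (htel N le_rfl) 2
  have hQ : 0 ≤ ‖u 0‖ ^ 2 + Q := add_nonneg (sq_nonneg _) ((sq_nonneg S).trans hCS)
  calc ‖u N‖ ^ 2 ≤ 2 * (‖u 0‖ ^ 2 + Q) := by nlinarith [sq_nonneg (‖u 0‖ - S)]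
    _ ≤ Real.exp 4 * (‖u 0‖ ^ 2 + Q) := mul_le_mul_of_nonneg_right he hQ
end

section
/- Let Γ : ℝ → ℝ be differentiable and suppose its derivative γ := Γ′ is Lipschitz continuous with constant L ≥ 0. Fix c ∈ ℝ and define g : ℝ → ℝ by g(t) := (Γ(t) − Γ(c))/(t − c) for t ≠ c and g(c) := γ(c). Then |g(t) − g(s)| ≤ 2·L·|t − s| for all s, t ∈ ℝ. -/
/-! By the fundamental theorem of calculus `g t = ∫₀¹ Γ'(c + u (t - c)) du`, including at `t = c`.
Hence `g t - g s` is the average over `u ∈ [0, 1]` of `Γ'(c + u (t - c)) - Γ'(c + u (s - c))`,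
which the Lipschitz bound controls by `L * u * |t - s| ≤ L * |t - s|`. The integral is avoided by
applying the mean value inequality to a difference of antiderivatives in `u`. -/

/-- An antiderivative in `u` of `Γ'(c + u (t - c))` whose increment over `[0, 1]` is the extended
difference quotient `g t`. -/
lemma exists_antideriv (Γ : ℝ → ℝ) (hΓ : Differentiable ℝ Γ) (c : ℝ) (g : ℝ → ℝ)
    (hg : ∀ t : ℝ, t ≠ c → g t = (Γ t - Γ c) / (t - c))
    (hgc : g c = deriv Γ c) (t : ℝ) :
    ∃ F : ℝ → ℝ, (∀ u, HasDerivAt F (deriv Γ (c + u * (t - c))) u) ∧ F 1 - F 0 = g t := by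
  by_cases h : t = c
  · subst h
    refine ⟨fun u => u * deriv Γ t, fun u => ?_, by simp [hgc]⟩
    simpa using (hasDerivAt_id u).mul_const (deriv Γ t)
  · have h0 : t - c ≠ 0 := sub_ne_zero.mpr h
    refine ⟨fun u => Γ (c + u * (t - c)) / (t - c), fun u => ?_, ?_⟩
    · have h1 : HasDerivAt (fun u : ℝ => c + u * (t - c)) (t - c) u := by
        simpa using ((hasDerivAt_id u).mul_const (t - c)).const_add c
      have h2 := ((hΓ (c + u * (t - c))).hasDerivAt.comp u h1).div_const (t - c)
      rwa [mul_div_cancel_right₀ _ h0] at h2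
    · rw [hg t h]
      simp [sub_div]

/-- Sub-claim from the proof of Lemma 5.3: the extended difference quotient
`g(t) = (Γ(t) − Γ(c))/(t − c)` (with `g(c) = Γ′(c)`) of a function with
`L`-Lipschitz derivative is `2L`-Lipschitz. -/
theorem stmt8 (Γ : ℝ → ℝ) (hΓ : Differentiable ℝ Γ) (L : ℝ) (hL : 0 ≤ L)
    (hlip : ∀ s t : ℝ, |deriv Γ s - deriv Γ t| ≤ L * |s - t|)
    (c : ℝ) (g : ℝ → ℝ)
    (hg : ∀ t : ℝ, t ≠ c → g t = (Γ t - Γ c) / (t - c))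
    (hgc : g c = deriv Γ c) :
    ∀ s t : ℝ, |g t - g s| ≤ 2 * L * |t - s| := by
  intro s t
  obtain ⟨F, hF, hFt⟩ := exists_antideriv Γ hΓ c g hg hgc t
  obtain ⟨G, hG, hGs⟩ := exists_antideriv Γ hΓ c g hg hgc s
  have hbound : ∀ u ∈ Set.Icc (0 : ℝ) 1,
      ‖deriv Γ (c + u * (t - c)) - deriv Γ (c + u * (s - c))‖ ≤ L * |t - s| := by
    intro u hu
    rw [Real.norm_eq_abs]
    refine (hlip _ _).trans (mul_le_mul_of_nonneg_left ?_ hL)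
    rw [show c + u * (t - c) - (c + u * (s - c)) = u * (t - s) by ring, abs_mul,
      abs_of_nonneg hu.1]
    exact mul_le_of_le_one_left (abs_nonneg _) hu.2
  have key := (convex_Icc (0 : ℝ) 1).norm_image_sub_le_of_norm_hasDerivWithin_le
    (fun u _ => ((hF u).sub (hG u)).hasDerivWithinAt) hbound
    (Set.left_mem_Icc.mpr zero_le_one) (Set.right_mem_Icc.mpr zero_le_one)
  have e : (F - G) 1 - (F - G) 0 = g t - g s := by
    rw [← hFt, ← hGs]
    simp only [Pi.sub_apply]
    ring
  rw [e, Real.norm_eq_abs, sub_zero, norm_one, mul_one] at key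
  nlinarith [mul_nonneg hL (abs_nonneg (t - s))]
end

section
/- Let a < b be real numbers and let f : [a, b] → ℂ be continuously differentiable. Then | ∫_a^b f(t) dt − (b − a)·(f(a) + f(b))/2 | ≤ ( (b − a)^{3/2} / (2·√3) ) · ( ∫_a^b |f′(t)|² dt )^{1/2}. -/
/-!
With `m = (a + b) / 2`, integration by parts against the kernel `t - m`, which equals
`± (b - a) / 2` at the endpoints, gives
`∫ f - (b - a) (f a + f b) / 2 = - ∫ (t - m) f' t`.
The Cauchy–Schwarz inequality together with `∫ (t - m)² = (b - a)³ / 12` then yields the bound.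
-/

/-- The Cauchy–Schwarz inequality on `[a, b]`, from the nonpositivity of the discriminant of
`x ↦ ∫ (x u + v)²`. -/
lemma sq_integral_mul_le {a b : ℝ} (hab : a ≤ b) {u v : ℝ → ℝ}
    (hu : ContinuousOn u (Set.Icc a b)) (hv : ContinuousOn v (Set.Icc a b)) :
    (∫ t in a..b, u t * v t) ^ 2 ≤ (∫ t in a..b, u t ^ 2) * ∫ t in a..b, v t ^ 2 := by
  have iu : IntervalIntegrable (fun t => u t ^ 2) MeasureTheory.volume a b :=
    (hu.pow 2).intervalIntegrable_of_Icc hab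
  have iv : IntervalIntegrable (fun t => v t ^ 2) MeasureTheory.volume a b :=
    (hv.pow 2).intervalIntegrable_of_Icc hab
  have iuv : IntervalIntegrable (fun t => u t * v t) MeasureTheory.volume a b :=
    (hu.mul hv).intervalIntegrable_of_Icc hab
  have key : ∀ x : ℝ, 0 ≤ (∫ t in a..b, u t ^ 2) * (x * x) +
      (2 * ∫ t in a..b, u t * v t) * x + ∫ t in a..b, v t ^ 2 := by
    intro x
    have h : ∫ t in a..b, (x * u t + v t) ^ 2 = (∫ t in a..b, u t ^ 2) * (x * x) +
        (2 * ∫ t in a..b, u t * v t) * x + ∫ t in a..b, v t ^ 2 := by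
      have e : ∀ t, (x * u t + v t) ^ 2 =
          (x * x) * u t ^ 2 + (2 * x) * (u t * v t) + v t ^ 2 := fun t => by ring
      simp_rw [e]
      rw [intervalIntegral.integral_add ((iu.const_mul _).add (iuv.const_mul _)) iv,
        intervalIntegral.integral_add (iu.const_mul _) (iuv.const_mul _),
        intervalIntegral.integral_const_mul, intervalIntegral.integral_const_mul]
      ring
    rw [← h]
    exact intervalIntegral.integral_nonneg hab fun t _ => sq_nonneg _
  have hd := discrim_le_zero key
  unfold discrim at hd
  linarith

/-- Trapezoidal-rule error bound in terms of the `L²` norm of the first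
derivative (used in the proof of Lemma 4.8, case `s = 1`):
`|∫_a^b f − (b−a)(f(a)+f(b))/2| ≤ ((b−a)^{3/2}/(2√3)) ‖f′‖_{L²(a,b)}`. -/
theorem stmt11 (a b : ℝ) (hab : a < b) (f : ℝ → ℂ)
    (hf : ContDiffOn ℝ 1 f (Set.Icc a b)) :
    ‖(∫ t in a..b, f t) - ((b - a : ℝ) : ℂ) * (f a + f b) / 2‖
      ≤ (b - a) ^ ((3 : ℝ) / 2) / (2 * Real.sqrt 3) *
        Real.sqrt (∫ t in a..b, ‖derivWithin f (Set.Icc a b) t‖ ^ 2) := by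
  set g := derivWithin f (Set.Icc a b) with hg
  have hgc : ContinuousOn g (Set.Icc a b) :=
    hf.continuousOn_derivWithin (uniqueDiffOn_Icc hab) le_rfl
  have hder : ∀ x ∈ Set.uIcc a b, HasDerivWithinAt f (g x) (Set.uIcc a b) x := by
    rw [Set.uIcc_of_le hab.le]
    exact fun x hx => ((hf.differentiableOn one_ne_zero) x hx).hasDerivWithinAt
  have hparts : ∫ t in a..b, (t - (a + b) / 2) • g t =
      (b - (a + b) / 2) • f b - (a - (a + b) / 2) • f a - ∫ t in a..b, (1 : ℝ) • f t :=
    intervalIntegral.integral_smul_deriv_eq_deriv_smul_of_hasDerivWithinAt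
      (fun x _ => ((hasDerivAt_id x).sub_const _).hasDerivWithinAt) hder
      (intervalIntegrable_const) (hgc.intervalIntegrable_of_Icc hab.le)
  have herr : (∫ t in a..b, f t) - ((b - a : ℝ) : ℂ) * (f a + f b) / 2 =
      -∫ t in a..b, (t - (a + b) / 2) • g t := by
    rw [hparts]
    simp only [Complex.real_smul, one_smul]
    push_cast
    ring
  have hkernel : ∫ t in a..b, |t - (a + b) / 2| ^ 2 = (b - a) ^ 3 / 12 := by
    simp_rw [sq_abs]
    rw [intervalIntegral.integral_comp_sub_right (fun t => t ^ 2), integral_pow]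
    push_cast
    ring
  have hCS := sq_integral_mul_le hab.le (u := fun t => |t - (a + b) / 2|) (v := fun t => ‖g t‖)
    (by fun_prop) hgc.norm
  rw [hkernel] at hCS
  have hconst : (b - a) ^ ((3 : ℝ) / 2) / (2 * Real.sqrt 3) = Real.sqrt ((b - a) ^ 3 / 12) := by
    have h0 : 0 < b - a := sub_pos.2 hab
    symm
    rw [Real.sqrt_eq_iff_mul_self_eq (by positivity) (by positivity), div_mul_div_comm,
      ← Real.rpow_add h0, mul_mul_mul_comm, Real.mul_self_sqrt (by norm_num),
      ← Real.rpow_natCast]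
    norm_num
  rw [herr, norm_neg, hconst, ← Real.sqrt_mul (by have := sub_pos.2 hab; positivity)]
  refine le_trans ?_ (Real.le_sqrt_of_sq_le hCS)
  refine (intervalIntegral.norm_integral_le_integral_norm hab.le).trans_eq ?_
  simp only [norm_smul, Real.norm_eq_abs]
end
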